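/- arXiv:1812.05566 — 2 statements merged into one kernel-verified Lean document; each statement's English description precedes it below -/
import Mathlib

section
/- Minimum length of capacity achieving ULDCs (Theorem 2): for all integers N ≥ 2 and K ≥ 1, the minimum code length M for which there exists a universal locally decodable code (ULDC) with locality N, K source symbols, M coded symbols, and symbol rate R_s = C*(N,K), equals N^K. -/
open scoped BigOperators

noncomputable section

/-- A finite probability space: a finite type together with a probability mass function. -/
structure FinProbSpace where
  Ω : Type
  [fin : Fintype Ω]
  p : Ω → ℝ
  nonneg : ∀ ω, 0 ≤ p ω
  sum_one : ∑ ω, p ω = 1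

attribute [instance] FinProbSpace.fin

namespace FinProbSpace

variable (P : FinProbSpace)

/-- Probability that the random variable `X` takes the value `a`. -/
def prob {α : Type} [DecidableEq α] (X : P.Ω → α) (a : α) : ℝ :=
  ∑ ω, if X ω = a then P.p ω else 0

/-- Shannon entropy (in bits) of a finitely valued random variable. -/
def H {α : Type} [Fintype α] [DecidableEq α] (X : P.Ω → α) : ℝ :=
  ∑ a, -(P.prob X a * Real.logb 2 (P.prob X a))

/-- Conditional Shannon entropy `H(X | Y) = H(X, Y) - H(Y)` (in bits). -/
def condH {α β : Type} [Fintype α] [DecidableEq α] [Fintype β] [DecidableEq β]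
    (X : P.Ω → α) (Y : P.Ω → β) : ℝ :=
  P.H (fun ω => (X ω, Y ω)) - P.H Y

/-- The tuple random variable `(X_i)_{i ∈ ι}`. -/
def tuple {ι V : Type} (X : ι → P.Ω → V) : P.Ω → ι → V := fun ω i => X i ω

/-- Joint (mutual) independence of a finite family of random variables. -/
def iIndep {ι V : Type} [Fintype ι] [DecidableEq ι] [DecidableEq V] (X : ι → P.Ω → V) : Prop :=
  ∀ a : ι → V, P.prob (P.tuple X) a = ∏ i, P.prob (X i) (a i)

/-- `X` and `Y` contain the same information about everything beyond `Z`: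
`H(X | Y, Z) = H(Y | X, Z) = 0`. -/
def sameInfo {α β γ : Type} [Fintype α] [DecidableEq α] [Fintype β] [DecidableEq β]
    [Fintype γ] [DecidableEq γ] (X : P.Ω → α) (Y : P.Ω → β) (Z : P.Ω → γ) : Prop :=
  P.condH X (fun ω => (Y ω, Z ω)) = 0 ∧ P.condH Y (fun ω => (X ω, Z ω)) = 0

end FinProbSpace

/-- A locally decodable code with `K` source symbols of entropy `Lw`, `M` coded symbols of
entropy `Lx`, and locality `N`. -/
structure LDC (K N M : ℕ) (Lw Lx : ℝ) where
  P : FinProbSpace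
  V : Type
  [fV : Fintype V]
  [dV : DecidableEq V]
  V' : Type
  [fV' : Fintype V']
  [dV' : DecidableEq V']
  /-- the source symbols -/
  W : Fin K → P.Ω → V
  /-- the coded symbols -/
  X : Fin M → P.Ω → V'
  indep : P.iIndep W
  HW : ∀ k, P.H (W k) = Lw
  coded_fn : ∀ m, ∃ f : (Fin K → V) → V', ∀ ω, X m ω = f (fun k => W k ω)
  HX : ∀ m, P.H (X m) = Lx
  /-- the decoding supersets -/
  decSets : Fin K → Finset (Finset (Fin M))
  decSets_nonempty : ∀ k, (decSets k).Nonempty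
  decSets_card : ∀ k, ∀ s ∈ decSets k, s.card = N
  decodes : ∀ k, ∀ s ∈ decSets k,
    P.condH (W k) (P.tuple fun i : {x // x ∈ s} => X i.1) = 0

attribute [instance] LDC.fV LDC.dV LDC.fV' LDC.dV'

/-- A universal LDC: every coded symbol appears in some decoding set of every source symbol. -/
def LDC.IsUniversal {K N M : ℕ} {Lw Lx : ℝ} (C : LDC K N M Lw Lx) : Prop :=
  ∀ (m : Fin M) (k : Fin K), ∃ s ∈ C.decSets k, m ∈ s

/-- A perfectly smooth LDC: for each source symbol, every coded symbol lies in the same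
number of decoding sets. -/
def LDC.IsSmooth {K N M : ℕ} {Lw Lx : ℝ} (C : LDC K N M Lw Lx) : Prop :=
  ∀ (k : Fin K) (m m' : Fin M),
    ((C.decSets k).filter (fun s => m ∈ s)).card =
      ((C.decSets k).filter (fun s => m' ∈ s)).card

/-- `C*(N, K) = N (1 + 1/N + ⋯ + 1/N^{K-1})⁻¹`. -/
def Cstar (N K : ℕ) : ℝ := N / (∑ j ∈ Finset.range K, (1 / (N : ℝ)) ^ j)

/-- An `N`-query information retrieval scheme with `K` messages of entropy `Lw` and
answer sets of sizes `Mn n` with answers of entropy `Lx`. -/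
structure IRScheme (K N : ℕ) (Mn : Fin N → ℕ) (Lw Lx : ℝ) where
  P : FinProbSpace
  V : Type
  [fV : Fintype V]
  [dV : DecidableEq V]
  V' : Type
  [fV' : Fintype V']
  [dV' : DecidableEq V']
  /-- the messages -/
  W : Fin K → P.Ω → V
  /-- `A n m` is the `m`-th possible answer of database `n` -/
  A : (n : Fin N) → Fin (Mn n) → P.Ω → V'
  indep : P.iIndep W
  HW : ∀ k, P.H (W k) = Lw
  ans_fn : ∀ n m, ∃ f : (Fin K → V) → V', ∀ ω, A n m ω = f (fun k => W k ω)
  HA : ∀ n m, P.H (A n m) = Lx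
  /-- the decoding supersets: each decoding set consists of one answer index per database -/
  Q : Fin K → Finset ((n : Fin N) → Fin (Mn n))
  Q_nonempty : ∀ k, (Q k).Nonempty
  decodes : ∀ k, ∀ q ∈ Q k, P.condH (W k) (P.tuple fun n => A n (q n)) = 0

attribute [instance] IRScheme.fV IRScheme.dV IRScheme.fV' IRScheme.dV'

/-- A repudiative (RIR_max) scheme: every possible answer of every database appears in some
decoding set of every message. -/
def IRScheme.IsRIR {K N : ℕ} {Mn : Fin N → ℕ} {Lw Lx : ℝ} (C : IRScheme K N Mn Lw Lx) : Prop :=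
  ∀ (n : Fin N) (m : Fin (Mn n)) (k : Fin K), ∃ q ∈ C.Q k, q n = m

/-- A perfectly private (PIR_max) scheme: for each message there is a distribution on its
decoding sets such that the marginal distribution of the query to each database does not
depend on the message. -/
def IRScheme.IsPIR {K N : ℕ} {Mn : Fin N → ℕ} {Lw Lx : ℝ} (C : IRScheme K N Mn Lw Lx) : Prop :=
  ∃ μ : Fin K → ((n : Fin N) → Fin (Mn n)) → ℝ,
    (∀ k q, 0 ≤ μ k q) ∧ (∀ k, ∑ q ∈ C.Q k, μ k q = 1) ∧
    (∀ (k k' : Fin K) (n : Fin N) (m : Fin (Mn n)),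
      ∑ q ∈ (C.Q k).filter (fun q => q n = m), μ k q =
        ∑ q ∈ (C.Q k').filter (fun q => q n = m), μ k' q)

/-- `C_K(N) = (1 + 1/N + ⋯ + 1/N^{K-1})⁻¹`, the capacity of PIR. -/
def CK (N K : ℕ) : ℝ := (∑ j ∈ Finset.range K, (1 / (N : ℝ)) ^ j)⁻¹

namespace FinProbSpace

variable (P : FinProbSpace) {α β γ δ : Type}

/-- The probability of the event `X = X ω`. -/
def fiberProb (X : P.Ω → α) (ω : P.Ω) : ℝ :=
  open Classical in ∑ ω', if X ω' = X ω then P.p ω' else 0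

/-- Shannon entropy (in bits), written as an expectation over the sample space. -/
def ent (X : P.Ω → α) : ℝ := ∑ ω, -(P.p ω * Real.logb 2 (P.fiberProb X ω))

theorem prob_apply_eq_fiberProb [DecidableEq α] (X : P.Ω → α) (ω : P.Ω) :
    P.prob X (X ω) = P.fiberProb X ω := by
  unfold prob fiberProb
  refine Finset.sum_congr rfl fun ω' _ => ?_
  by_cases h : X ω' = X ω <;> simp [h]

theorem H_eq_ent [Fintype α] [DecidableEq α] (X : P.Ω → α) : P.H X = P.ent X := by
  have h (a : α) : -(P.prob X a * Real.logb 2 (P.prob X a)) =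
      ∑ ω, if X ω = a then -(P.p ω * Real.logb 2 (P.fiberProb X ω)) else 0 := by
    conv_lhs => rw [prob]
    rw [Finset.sum_mul, ← Finset.sum_neg_distrib]
    refine Finset.sum_congr rfl fun ω _ => ?_
    split_ifs with hω
    · rw [← P.prob_apply_eq_fiberProb, hω]
      rfl
    · simp
  unfold H ent
  rw [Finset.sum_congr rfl fun a _ => h a, Finset.sum_comm]
  simp

theorem fiberProb_mono {X : P.Ω → α} {Y : P.Ω → β} {ω : P.Ω}
    (h : ∀ ω', X ω' = X ω → Y ω' = Y ω) : P.fiberProb X ω ≤ P.fiberProb Y ω := by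
  classical
  unfold fiberProb
  refine Finset.sum_le_sum fun ω' _ => ?_
  by_cases h1 : X ω' = X ω
  · simp [h1, h ω' h1]
  · rw [if_neg h1]
    split_ifs
    exacts [P.nonneg ω', le_rfl]

theorem fiberProb_nonneg (X : P.Ω → α) (ω : P.Ω) : 0 ≤ P.fiberProb X ω := by
  classical
  unfold fiberProb
  refine Finset.sum_nonneg fun ω' _ => ?_
  split_ifs
  exacts [P.nonneg ω', le_rfl]

theorem fiberProb_pos (X : P.Ω → α) {ω : P.Ω} (h : 0 < P.p ω) : 0 < P.fiberProb X ω := by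
  classical
  unfold fiberProb
  refine h.trans_le ?_
  have := Finset.single_le_sum (f := fun ω' => if X ω' = X ω then P.p ω' else 0)
    (fun ω' _ => by split_ifs; exacts [P.nonneg ω', le_rfl]) (Finset.mem_univ ω)
  simpa using this

theorem ent_mono {X : P.Ω → α} {Y : P.Ω → β} (h : ∀ ω ω', X ω' = X ω → Y ω' = Y ω) :
    P.ent Y ≤ P.ent X := by
  unfold ent
  refine Finset.sum_le_sum fun ω _ => ?_
  rcases (P.nonneg ω).eq_or_lt with h0 | h0
  · simp [← h0]
  · refine neg_le_neg (mul_le_mul_of_nonneg_left ?_ h0.le)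
    exact Real.logb_le_logb_of_le one_lt_two (P.fiberProb_pos X h0) (P.fiberProb_mono (h ω))

theorem ent_congr {X : P.Ω → α} {Y : P.Ω → β} (h : ∀ ω ω', X ω' = X ω ↔ Y ω' = Y ω) :
    P.ent X = P.ent Y :=
  le_antisymm (P.ent_mono fun ω ω' => (h ω ω').2) (P.ent_mono fun ω ω' => (h ω ω').1)

theorem ent_eq_zero {X : P.Ω → α} (h : ∀ ω ω', X ω' = X ω) : P.ent X = 0 := by
  unfold ent
  refine Finset.sum_eq_zero fun ω _ => ?_
  have : P.fiberProb X ω = 1 := by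
    simp [fiberProb, h ω, P.sum_one]
  simp [this]

theorem sum_ratio_le_one {X : P.Ω → α} {Y : P.Ω → β} {U : P.Ω → γ} {Z : P.Ω → δ}
    (hU : ∀ ω ω', U ω' = U ω ↔ X ω' = X ω ∧ Y ω' = Y ω)
    (hX : ∀ ω ω', X ω' = X ω → Z ω' = Z ω) (hY : ∀ ω ω', Y ω' = Y ω → Z ω' = Z ω) :
    ∑ ω, P.p ω * (P.fiberProb X ω * P.fiberProb Y ω / (P.fiberProb U ω * P.fiberProb Z ω)) ≤
      1 := by
  classical
  have key (a b : P.Ω) : ∑ ω, (if X a = X ω ∧ Y b = Y ω then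
      P.p ω / (P.fiberProb U ω * P.fiberProb Z ω) else 0) ≤
      if Z b = Z a then 1 / P.fiberProb Z a else 0 := by
    by_cases hex : ∃ ω, X a = X ω ∧ Y b = Y ω
    · obtain ⟨ω₀, h1, h2⟩ := hex
      have hZa := hX _ _ h1
      have hZb := hY _ _ h2
      rw [if_pos (hZb.trans hZa.symm)]
      have hqZ : P.fiberProb Z a = P.fiberProb Z ω₀ := by simp [fiberProb, hZa]
      calc _ = ∑ ω, (if U ω = U ω₀ then P.p ω else 0) *
            (1 / (P.fiberProb U ω₀ * P.fiberProb Z ω₀)) := by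
            refine Finset.sum_congr rfl fun ω _ => ?_
            by_cases h : U ω = U ω₀
            · have h' := (hU _ _).1 h
              have e1 : P.fiberProb U ω = P.fiberProb U ω₀ := by simp [fiberProb, h]
              have e2 : P.fiberProb Z ω = P.fiberProb Z ω₀ := by
                simp [fiberProb, hX _ _ h'.1]
              rw [if_pos ⟨h1.trans h'.1.symm, h2.trans h'.2.symm⟩, if_pos h, e1, e2]
              ring
            · rw [if_neg h, if_neg, zero_mul]
              rintro ⟨h3, h4⟩
              exact h ((hU _ _).2 ⟨h3.symm.trans h1, h4.symm.trans h2⟩)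
        _ = P.fiberProb U ω₀ / P.fiberProb U ω₀ * (1 / P.fiberProb Z ω₀) := by
            rw [← Finset.sum_mul, ← fiberProb]
            ring
        _ ≤ 1 * (1 / P.fiberProb Z ω₀) :=
            mul_le_mul_of_nonneg_right (div_self_le_one _)
              (one_div_nonneg.2 (P.fiberProb_nonneg Z ω₀))
        _ = 1 / P.fiberProb Z a := by rw [hqZ, one_mul]
    · rw [Finset.sum_eq_zero]
      · split_ifs
        exacts [one_div_nonneg.2 (P.fiberProb_nonneg Z a), le_rfl]
      · intro ω _
        rw [if_neg fun h => hex ⟨ω, h⟩]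
  calc _ = ∑ ω, ∑ a, ∑ b, P.p a * (P.p b * (if X a = X ω ∧ Y b = Y ω then
      P.p ω / (P.fiberProb U ω * P.fiberProb Z ω) else 0)) := by
        refine Finset.sum_congr rfl fun ω _ => ?_
        have : P.fiberProb X ω * P.fiberProb Y ω = ∑ a, ∑ b,
            (if X a = X ω then P.p a else 0) * (if Y b = Y ω then P.p b else 0) := by
          rw [← Finset.sum_mul_sum]; rfl
        rw [this, Finset.sum_div, Finset.mul_sum]
        refine Finset.sum_congr rfl fun a _ => ?_
        rw [Finset.sum_div, Finset.mul_sum]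
        refine Finset.sum_congr rfl fun b _ => ?_
        by_cases h1 : X a = X ω <;> by_cases h2 : Y b = Y ω <;> simp [h1, h2]
        ring
    _ = ∑ a, P.p a * ∑ b, P.p b * ∑ ω, (if X a = X ω ∧ Y b = Y ω then
      P.p ω / (P.fiberProb U ω * P.fiberProb Z ω) else 0) := by
        rw [Finset.sum_comm]
        refine Finset.sum_congr rfl fun a _ => ?_
        rw [Finset.sum_comm, Finset.mul_sum]
        refine Finset.sum_congr rfl fun b _ => ?_
        rw [← Finset.mul_sum, ← Finset.mul_sum]
    _ ≤ ∑ a, P.p a * ∑ b, P.p b * (if Z b = Z a then 1 / P.fiberProb Z a else 0) := by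
        refine Finset.sum_le_sum fun a _ => mul_le_mul_of_nonneg_left ?_ (P.nonneg a)
        exact Finset.sum_le_sum fun b _ => mul_le_mul_of_nonneg_left (key a b) (P.nonneg b)
    _ = ∑ a, P.p a * (P.fiberProb Z a / P.fiberProb Z a) := by
        refine Finset.sum_congr rfl fun a _ => ?_
        congr 1
        conv_rhs => rw [div_eq_mul_one_div]; lhs; rw [fiberProb]
        rw [Finset.sum_mul]
        refine Finset.sum_congr rfl fun b _ => ?_
        split_ifs <;> simp
    _ ≤ ∑ a, P.p a :=
        Finset.sum_le_sum fun a _ => mul_le_of_le_one_right (P.nonneg a) (div_self_le_one _)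
    _ = 1 := P.sum_one

/-- Submodularity of entropy: `U` plays the role of the pair `(X, Y)`, and `Z` is a common
function of `X` and of `Y`. -/
theorem ent_submodular {X : P.Ω → α} {Y : P.Ω → β} {U : P.Ω → γ} {Z : P.Ω → δ}
    (hU : ∀ ω ω', U ω' = U ω ↔ X ω' = X ω ∧ Y ω' = Y ω)
    (hX : ∀ ω ω', X ω' = X ω → Z ω' = Z ω) (hY : ∀ ω ω', Y ω' = Y ω → Z ω' = Z ω) :
    P.ent U + P.ent Z ≤ P.ent X + P.ent Y := by
  have hlog : 0 < Real.log 2 := Real.log_pos one_lt_two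
  have hterm (ω : P.Ω) : P.p ω * (Real.log (P.fiberProb X ω) + Real.log (P.fiberProb Y ω) -
      Real.log (P.fiberProb U ω) - Real.log (P.fiberProb Z ω)) ≤
      P.p ω * (P.fiberProb X ω * P.fiberProb Y ω / (P.fiberProb U ω * P.fiberProb Z ω)) -
        P.p ω := by
    rcases (P.nonneg ω).eq_or_lt with h0 | h0
    · simp [← h0]
    · have hx := P.fiberProb_pos X h0
      have hy := P.fiberProb_pos Y h0
      have hu := P.fiberProb_pos U h0
      have hz := P.fiberProb_pos Z h0
      have h := Real.log_le_sub_one_of_pos (div_pos (mul_pos hx hy) (mul_pos hu hz))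
      rw [Real.log_div (by positivity) (by positivity), Real.log_mul hx.ne' hy.ne',
        Real.log_mul hu.ne' hz.ne'] at h
      calc _ ≤ P.p ω * (P.fiberProb X ω * P.fiberProb Y ω /
            (P.fiberProb U ω * P.fiberProb Z ω) - 1) :=
            mul_le_mul_of_nonneg_left (by linarith) h0.le
        _ = _ := by ring
  have hsum := Finset.sum_le_sum fun ω (_ : ω ∈ Finset.univ) => hterm ω
  rw [Finset.sum_sub_distrib, P.sum_one] at hsum
  have hle := P.sum_ratio_le_one hU hX hY
  have hdiff : P.ent U + P.ent Z - (P.ent X + P.ent Y) = (∑ ω, P.p ω *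
      (Real.log (P.fiberProb X ω) + Real.log (P.fiberProb Y ω) -
      Real.log (P.fiberProb U ω) - Real.log (P.fiberProb Z ω))) / Real.log 2 := by
    unfold ent
    rw [← Finset.sum_add_distrib, ← Finset.sum_add_distrib, ← Finset.sum_sub_distrib,
      Finset.sum_div]
    refine Finset.sum_congr rfl fun ω _ => ?_
    simp only [Real.logb]
    ring
  have : P.ent U + P.ent Z - (P.ent X + P.ent Y) ≤ 0 := by
    rw [hdiff]
    exact div_nonpos_of_nonpos_of_nonneg (by linarith) hlog.le
  linarith

theorem ent_tuple_of_iIndep {ι V : Type} [Fintype ι] [DecidableEq ι] [DecidableEq V]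
    {X : ι → P.Ω → V} (h : P.iIndep X) : P.ent (P.tuple X) = ∑ i, P.ent (X i) := by
  unfold ent
  rw [Finset.sum_comm]
  refine Finset.sum_congr rfl fun ω _ => ?_
  rcases (P.nonneg ω).eq_or_lt with h0 | h0
  · simp [← h0]
  · have h1 : P.fiberProb (P.tuple X) ω = ∏ i, P.fiberProb (X i) ω := by
      rw [← prob_apply_eq_fiberProb, h]
      exact Finset.prod_congr rfl fun i _ => P.prob_apply_eq_fiberProb (X i) ω
    rw [h1, Real.logb_prod _ _ fun i _ => (P.fiberProb_pos (X i) h0).ne', Finset.mul_sum,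
      Finset.sum_neg_distrib]

end FinProbSpace

/-- The joint entropy function of the source and coded symbols of a capacity achieving ULDC,
abstracted to its combinatorial properties. -/
structure ULDCEntropy (K N M : ℕ) (Lw Lx : ℝ) where
  /-- joint entropy of a set of source symbols and a set of coded symbols -/
  e : Finset (Fin K) → Finset (Fin M) → ℝ
  mono : ∀ {T T' S S'}, T ⊆ T' → S ⊆ S' → e T S ≤ e T' S'
  submod : ∀ T T' S S', e (T ∪ T') (S ∪ S') + e (T ∩ T') (S ∩ S') ≤ e T S + e T' S'
  source : ∀ T, e T ∅ = T.card * Lw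
  coded : ∀ m, e ∅ {m} = Lx
  full : ∀ S, e Finset.univ S = K * Lw
  decSets : Fin K → Finset (Finset (Fin M))
  decSets_card : ∀ k, ∀ s ∈ decSets k, s.card = N
  decodes : ∀ k, ∀ s ∈ decSets k, e {k} s = e ∅ s
  universal : ∀ m k, ∃ s ∈ decSets k, m ∈ s

/-- The sum `1/N + 1/N² + ⋯ + 1/N^d`. -/
def invPowSum (N d : ℕ) : ℝ := ∑ i ∈ Finset.range d, (1 / (N : ℝ)) ^ (i + 1)

theorem mul_invPowSum_succ {N : ℕ} (hN : 0 < N) (d : ℕ) :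
    N * invPowSum N (d + 1) = 1 + invPowSum N d := by
  have hN' : (N : ℝ) ≠ 0 := by positivity
  unfold invPowSum
  rw [Finset.mul_sum, Finset.sum_range_succ', add_comm]
  congr 1
  · simp [hN']
  · refine Finset.sum_congr rfl fun i _ => ?_
    rw [pow_succ' _ (i + 1), ← mul_assoc, mul_one_div_cancel hN', one_mul]

theorem invPowSum_succ_pos {N : ℕ} (hN : 0 < N) (d : ℕ) : 0 < invPowSum N (d + 1) := by
  unfold invPowSum
  have : (0 : ℝ) < N := by positivity
  exact Finset.sum_pos (fun i _ => by positivity) (by simp)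

namespace ULDCEntropy

variable {K N M : ℕ} {Lw Lx : ℝ} (E : ULDCEntropy K N M Lw Lx)

theorem le_sum (T : Finset (Fin K)) (S : Finset (Fin M)) :
    E.e T S - T.card * Lw ≤ ∑ i ∈ S, (E.e T {i} - T.card * Lw) := by
  induction S using Finset.induction_on with
  | empty => simp [E.source]
  | insert i S hi ih =>
    have h := E.submod T T {i} S
    rw [Finset.union_self, Finset.inter_self, Finset.singleton_inter_of_notMem hi, E.source,
      ← Finset.insert_eq] at h
    rw [Finset.sum_insert hi]
    linarith

theorem e_insert_of_mem_decSets {k : Fin K} {T : Finset (Fin K)} (hk : k ∉ T)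
    {S : Finset (Fin M)} (hS : S ∈ E.decSets k) : E.e (insert k T) S = E.e T S := by
  refine le_antisymm ?_ (E.mono (Finset.subset_insert k T) subset_rfl)
  have h := E.submod {k} T S S
  rw [Finset.singleton_inter_of_notMem hk, Finset.union_self, Finset.inter_self,
    ← Finset.insert_eq, E.decodes k S hS] at h
  linarith

theorem e_singleton_le (hN : 0 < N) (hLx : Lx = Lw * invPowSum N K) {d : ℕ}
    {T : Finset (Fin K)} (hT : T.card + d = K) (m : Fin M) :
    E.e T {m} - T.card * Lw ≤ Lw * invPowSum N d := by
  induction T using Finset.induction_on generalizing d m with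
  | empty =>
    obtain rfl : d = K := by simpa using hT
    simp [E.coded, hLx]
  | insert k T hk ih =>
    obtain ⟨S, hS, hm⟩ := E.universal m k
    rw [Finset.card_insert_of_notMem hk] at hT ⊢
    have h1 := E.mono (subset_refl (insert k T)) (Finset.singleton_subset_iff.2 hm)
    rw [E.e_insert_of_mem_decSets hk hS] at h1
    have h2 := E.le_sum T S
    have h3 := Finset.sum_le_card_nsmul S _ _
      fun i _ => ih (d := d + 1) (by omega) i
    rw [E.decSets_card k S hS, nsmul_eq_mul] at h3
    have h4 := congrArg (Lw * ·) (mul_invPowSum_succ hN d)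
    push_cast
    linarith

theorem e_singleton_eq (hN : 0 < N) (hLx : Lx = Lw * invPowSum N K) (d : ℕ)
    {T : Finset (Fin K)} (hT : T.card + d = K) (m : Fin M) :
    E.e T {m} = T.card * Lw + Lw * invPowSum N d := by
  induction d generalizing T m with
  | zero =>
    obtain rfl : T = Finset.univ :=
      (Finset.card_eq_iff_eq_univ T).1 (by simpa using hT)
    simp [E.full, invPowSum]
  | succ d ih =>
    obtain ⟨k, hk⟩ : ∃ k, k ∉ T := by
      by_contra! h
      have := Finset.card_fin K ▸ congrArg Finset.card (Finset.eq_univ_of_forall h)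
      omega
    obtain ⟨S, hS, hm⟩ := E.universal m k
    have hc : (insert k T).card = T.card + 1 := Finset.card_insert_of_notMem hk
    have h1 := E.mono (subset_refl (insert k T)) (Finset.singleton_subset_iff.2 hm)
    rw [E.e_insert_of_mem_decSets hk hS, ih (by omega) m, hc] at h1
    have h2 := E.le_sum T S
    have h3 := Finset.sum_le_card_nsmul (S.erase m) _ _
      fun i _ => E.e_singleton_le hN hLx hT i
    rw [← Finset.add_sum_erase S _ hm] at h2
    rw [Finset.card_erase_of_mem hm, E.decSets_card k S hS, nsmul_eq_mul,
      Nat.cast_sub (by omega)] at h3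
    have h4 := congrArg (Lw * ·) (mul_invPowSum_succ hN d)
    have h5 := E.e_singleton_le hN hLx hT m
    push_cast at h1 h3
    linarith

theorem e_decSet_eq (hN : 0 < N) (hLx : Lx = Lw * invPowSum N K) {d : ℕ}
    {T : Finset (Fin K)} (hT : T.card + (d + 1) = K) {k : Fin K} (hk : k ∉ T)
    {S : Finset (Fin M)} (hS : S ∈ E.decSets k) :
    E.e T S = T.card * Lw + N * (Lw * invPowSum N (d + 1)) := by
  obtain ⟨m, hm⟩ : S.Nonempty := Finset.card_pos.1 (by rw [E.decSets_card k S hS]; exact hN)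
  have hc : (insert k T).card = T.card + 1 := Finset.card_insert_of_notMem hk
  have h1 := E.mono (subset_refl (insert k T)) (Finset.singleton_subset_iff.2 hm)
  rw [E.e_insert_of_mem_decSets hk hS,
    E.e_singleton_eq hN hLx d (by omega) m, hc] at h1
  have h2 := E.le_sum T S
  have h3 := Finset.sum_le_card_nsmul S _ _ fun i _ => E.e_singleton_le hN hLx hT i
  rw [E.decSets_card k S hS, nsmul_eq_mul] at h3
  have h4 := congrArg (Lw * ·) (mul_invPowSum_succ hN d)
  push_cast at h1
  linarith

theorem e_pair_le_of_mem (hN : 0 < N) (hLx : Lx = Lw * invPowSum N K) {d : ℕ}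
    {T : Finset (Fin K)} (hT : T.card + (d + 1) = K) {k : Fin K} (hk : k ∉ T)
    {S : Finset (Fin M)} (hS : S ∈ E.decSets k) {a b : Fin M} (ha : a ∈ S) (hb : b ∈ S) :
    E.e (insert k T) {a, b} ≤ E.e (insert k T) {a} := by
  have hc : (insert k T).card = T.card + 1 := Finset.card_insert_of_notMem hk
  have h1 : E.e (insert k T) {a, b} ≤ E.e (insert k T) S :=
    E.mono subset_rfl (by simp [Finset.insert_subset_iff, ha, hb])
  rw [E.e_insert_of_mem_decSets hk hS, E.e_decSet_eq hN hLx hT hk hS] at h1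
  rw [E.e_singleton_eq hN hLx d (by omega) a, hc]
  have h4 := congrArg (Lw * ·) (mul_invPowSum_succ hN d)
  push_cast
  linarith

theorem lt_e_pair_of_mem (hN : 0 < N) (hLw : 0 < Lw) (hLx : Lx = Lw * invPowSum N K) {d : ℕ}
    {T : Finset (Fin K)} (hT : T.card + (d + 1) = K) {k : Fin K} (hk : k ∉ T)
    {S : Finset (Fin M)} (hS : S ∈ E.decSets k) {a b : Fin M} (ha : a ∈ S) (hb : b ∈ S)
    (hab : a ≠ b) : E.e T {a} < E.e T {a, b} := by
  have h1 := E.submod T T (S.erase b) {a, b}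
  have hu : S.erase b ∪ {a, b} = S := by
    ext x
    simp only [Finset.mem_union, Finset.mem_erase, Finset.mem_insert, Finset.mem_singleton]
    constructor
    · rintro (h | rfl | rfl)
      exacts [h.2, ha, hb]
    · tauto
  have hi : S.erase b ∩ {a, b} = {a} := by
    ext x
    simp only [Finset.mem_inter, Finset.mem_erase, Finset.mem_insert, Finset.mem_singleton]
    constructor
    · tauto
    · rintro rfl
      exact ⟨⟨hab, ha⟩, Or.inl rfl⟩
  rw [Finset.union_self, Finset.inter_self, hu, hi, E.e_decSet_eq hN hLx hT hk hS] at h1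
  have h2 := E.le_sum T (S.erase b)
  have h3 := Finset.sum_le_card_nsmul (S.erase b) _ _ fun i _ => E.e_singleton_le hN hLx hT i
  rw [Finset.card_erase_of_mem hb, E.decSets_card k S hS, nsmul_eq_mul,
    Nat.cast_sub (by omega)] at h3
  have h5 := mul_pos hLw (invPowSum_succ_pos hN d)
  push_cast at h3
  linarith

theorem exists_inequivalent (hN : 0 < N) (hLw : 0 < Lw) (hLx : Lx = Lw * invPowSum N K)
    (m₀ : Fin M) (d : ℕ) {T : Finset (Fin K)} (hT : T.card + d = K) :
    ∃ A : Finset (Fin M), A.card = N ^ d ∧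
      ∀ a ∈ A, ∀ b ∈ A, E.e T {a, b} ≤ E.e T {a} → a = b := by
  induction d generalizing T with
  | zero => exact ⟨{m₀}, by simp, by simp⟩
  | succ d ih =>
    obtain ⟨k, hk⟩ : ∃ k, k ∉ T := by
      by_contra! h
      have := Finset.card_fin K ▸ congrArg Finset.card (Finset.eq_univ_of_forall h)
      omega
    have hc : (insert k T).card = T.card + 1 := Finset.card_insert_of_notMem hk
    obtain ⟨A, hA, hinj⟩ := ih (T := insert k T) (by omega)
    choose S hS hmem using fun m => E.universal m k
    have heq (a b : Fin M) : E.e (insert k T) {a} = E.e (insert k T) {b} := by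
      rw [E.e_singleton_eq hN hLx d (by omega) a,
        E.e_singleton_eq hN hLx d (by omega) b]
    have htrans (a b c : Fin M) (h1 : E.e (insert k T) {a, b} ≤ E.e (insert k T) {a})
        (h2 : E.e (insert k T) {b, c} ≤ E.e (insert k T) {b}) :
        E.e (insert k T) {a, c} ≤ E.e (insert k T) {a} := by
      have h0 := heq a b
      have h3 := E.submod (insert k T) (insert k T) {a, b} {b, c}
      rw [Finset.union_self, Finset.inter_self] at h3
      have h4 : E.e (insert k T) {b} ≤ E.e (insert k T) ({a, b} ∩ {b, c}) :=
        E.mono subset_rfl (by simp)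
      have h5 : E.e (insert k T) {a, c} ≤ E.e (insert k T) ({a, b} ∪ {b, c}) :=
        E.mono subset_rfl (by intro x; simp; tauto)
      linarith
    have hlink (m m' b b' : Fin M) (hm : m ∈ A) (hm' : m' ∈ A) (hb : b ∈ S m)
        (hb' : b' ∈ S m') (h : E.e (insert k T) {b, b'} ≤ E.e (insert k T) {b}) : m = m' :=
      hinj m hm m' hm' (htrans _ _ _ (E.e_pair_le_of_mem hN hLx hT hk (hS m) (hmem m) hb)
        (htrans _ _ _ h (E.e_pair_le_of_mem hN hLx hT hk (hS m') hb' (hmem m'))))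
    refine ⟨A.biUnion S, ?_, ?_⟩
    · rw [Finset.card_biUnion, Finset.sum_congr rfl fun m _ => E.decSets_card k (S m) (hS m)]
      · simp [hA, pow_succ]
      · intro m hm m' hm' hne
        rw [Function.onFun, Finset.disjoint_left]
        intro b hb hb'
        exact hne (hlink _ _ _ _ hm hm' hb hb' (by simp))
    · intro b hb b' hb' h
      obtain ⟨m, hm, hb⟩ := Finset.mem_biUnion.1 hb
      obtain ⟨m', hm', hb'⟩ := Finset.mem_biUnion.1 hb'
      have h1 := E.submod (insert k T) T {b} {b, b'}
      rw [Finset.union_eq_left.2 (Finset.subset_insert k T),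
        Finset.inter_eq_right.2 (Finset.subset_insert k T),
        Finset.union_eq_right.2 (by simp), Finset.inter_eq_left.2 (by simp)] at h1
      have hmm : m = m' := hlink _ _ _ _ hm hm' hb hb' (by linarith)
      rw [← hmm] at hb'
      by_contra hne
      have hlt := E.lt_e_pair_of_mem hN hLw hLx hT hk (hS m) hb hb' hne
      linarith

theorem pow_le_length (E : ULDCEntropy K N M Lw Lx) (hN : 0 < N) (hLw : 0 < Lw)
    (hLx : Lx = Lw * invPowSum N K)
    (m₀ : Fin M) : N ^ K ≤ M := by
  obtain ⟨A, hA, -⟩ := E.exists_inequivalent hN hLw hLx m₀ K (T := ∅) (by simp)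
  rw [← hA]
  exact card_finset_fin_le A

end ULDCEntropy

namespace LDC

variable {K N M : ℕ} {Lw Lx : ℝ} (C : LDC K N M Lw Lx)

/-- The joint entropy of the source symbols in `T` and the coded symbols in `S`. -/
def jointEnt (T : Finset (Fin K)) (S : Finset (Fin M)) : ℝ :=
  C.P.ent fun ω => (fun k : T => C.W k ω, fun m : S => C.X m ω)

theorem jointEnt_eq_ent {α : Type} {T : Finset (Fin K)} {S : Finset (Fin M)} {Y : C.P.Ω → α}
    (h : ∀ ω ω', Y ω' = Y ω ↔
      (∀ k ∈ T, C.W k ω' = C.W k ω) ∧ ∀ m ∈ S, C.X m ω' = C.X m ω) :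
    C.jointEnt T S = C.P.ent Y :=
  C.P.ent_congr fun ω ω' => by
    rw [h]
    simp only [Prod.mk.injEq, funext_iff, Subtype.forall]

theorem jointEnt_mono {T T' : Finset (Fin K)} {S S' : Finset (Fin M)} (hT : T ⊆ T')
    (hS : S ⊆ S') : C.jointEnt T S ≤ C.jointEnt T' S' :=
  C.P.ent_mono fun ω ω' => by
    simp only [Prod.mk.injEq, funext_iff, Subtype.forall]
    exact fun h => ⟨fun k hk => h.1 k (hT hk), fun m hm => h.2 m (hS hm)⟩

theorem jointEnt_submodular (T T' : Finset (Fin K)) (S S' : Finset (Fin M)) :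
    C.jointEnt (T ∪ T') (S ∪ S') + C.jointEnt (T ∩ T') (S ∩ S') ≤
      C.jointEnt T S + C.jointEnt T' S' := by
  refine C.P.ent_submodular (fun ω ω' => ?_) (fun ω ω' => ?_) (fun ω ω' => ?_)
  all_goals
    simp only [Prod.mk.injEq, funext_iff, Subtype.forall, Finset.mem_union, Finset.mem_inter]
  · constructor
    · exact fun h => ⟨⟨fun k hk => h.1 k (Or.inl hk), fun m hm => h.2 m (Or.inl hm)⟩,
        fun k hk => h.1 k (Or.inr hk), fun m hm => h.2 m (Or.inr hm)⟩
    · exact fun h => ⟨fun k hk => hk.elim (h.1.1 k) (h.2.1 k),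
        fun m hm => hm.elim (h.1.2 m) (h.2.2 m)⟩
  · exact fun h => ⟨fun k hk => h.1 k hk.1, fun m hm => h.2 m hm.1⟩
  · exact fun h => ⟨fun k hk => h.1 k hk.2, fun m hm => h.2 m hm.2⟩

theorem jointEnt_empty : C.jointEnt ∅ ∅ = 0 :=
  C.P.ent_eq_zero fun ω ω' => by
    simp only [Prod.mk.injEq, funext_iff, Subtype.forall]
    simp

theorem jointEnt_singleton_source (k : Fin K) : C.jointEnt {k} ∅ = Lw := by
  rw [C.jointEnt_eq_ent (Y := C.W k) (by simp), ← C.P.H_eq_ent, C.HW]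

theorem jointEnt_singleton_coded (m : Fin M) : C.jointEnt ∅ {m} = Lx := by
  rw [C.jointEnt_eq_ent (Y := C.X m) (by simp), ← C.P.H_eq_ent, C.HX]

theorem jointEnt_univ (S : Finset (Fin M)) : C.jointEnt Finset.univ S = K * Lw := by
  rw [C.jointEnt_eq_ent (Y := C.P.tuple C.W), C.P.ent_tuple_of_iIndep C.indep]
  · simp [← C.P.H_eq_ent, C.HW]
  · intro ω ω'
    simp only [FinProbSpace.tuple, funext_iff, Finset.mem_univ, true_imp_iff]
    refine ⟨fun h => ⟨h, fun m _ => ?_⟩, fun h => h.1⟩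
    obtain ⟨f, hf⟩ := C.coded_fn m
    rw [hf, hf, funext h]

theorem jointEnt_source_le (T : Finset (Fin K)) : C.jointEnt T ∅ ≤ T.card * Lw := by
  induction T using Finset.induction_on with
  | empty => simp [C.jointEnt_empty]
  | insert k T hk ih =>
    have h := C.jointEnt_submodular {k} T ∅ ∅
    rw [Finset.singleton_inter_of_notMem hk, Finset.union_self, Finset.inter_self,
      ← Finset.insert_eq, C.jointEnt_empty, C.jointEnt_singleton_source] at h
    rw [Finset.card_insert_of_notMem hk]
    push_cast
    linarith

theorem jointEnt_source (T : Finset (Fin K)) : C.jointEnt T ∅ = T.card * Lw := by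
  refine le_antisymm (C.jointEnt_source_le T) ?_
  have h := C.jointEnt_submodular T Tᶜ ∅ ∅
  rw [Finset.union_compl, Finset.inter_compl, Finset.union_self, Finset.inter_self,
    C.jointEnt_empty, C.jointEnt_univ] at h
  have h1 := C.jointEnt_source_le Tᶜ
  have h2 : ((T.card + Tᶜ.card : ℕ) : ℝ) = K := by
    rw [Finset.card_add_card_compl, Fintype.card_fin]
  rw [← h2] at h
  push_cast at h
  linarith

theorem jointEnt_decodes {k : Fin K} {s : Finset (Fin M)} (hs : s ∈ C.decSets k) :
    C.jointEnt {k} s = C.jointEnt ∅ s := by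
  have h := C.decodes k s hs
  rw [FinProbSpace.condH, sub_eq_zero, C.P.H_eq_ent, C.P.H_eq_ent] at h
  rw [C.jointEnt_eq_ent (Y := fun ω => (C.W k ω,
    C.P.tuple (fun i : {x // x ∈ s} => C.X i.1) ω)), h, ← C.jointEnt_eq_ent]
  all_goals
    intro ω ω'
    simp [FinProbSpace.tuple, funext_iff]

/-- The joint entropy function of a universal code. -/
def toULDCEntropy (hC : C.IsUniversal) : ULDCEntropy K N M Lw Lx where
  e := C.jointEnt
  mono := C.jointEnt_mono
  submod := C.jointEnt_submodular
  source := C.jointEnt_source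
  coded := C.jointEnt_singleton_coded
  full := C.jointEnt_univ
  decSets := C.decSets
  decSets_card := C.decSets_card
  decodes _ _ := C.jointEnt_decodes
  universal := hC

theorem pow_le_length (C : LDC K N M Lw Lx) (hC : C.IsUniversal) (hK : 0 < K) (hN : 0 < N)
    (hLw : 0 < Lw) (hLx : 0 < Lx) (hrate : Lw / Lx = Cstar N K) : N ^ K ≤ M := by
  have hN' : (0 : ℝ) < N := by positivity
  obtain ⟨s, hs⟩ := C.decSets_nonempty ⟨0, hK⟩
  obtain ⟨m, -⟩ : s.Nonempty := Finset.card_pos.1 (by rw [C.decSets_card _ s hs]; exact hN)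
  refine (C.toULDCEntropy hC).pow_le_length hN hLw ?_ m
  have h1 : N * invPowSum N K = ∑ j ∈ Finset.range K, (1 / (N : ℝ)) ^ j := by
    unfold invPowSum
    rw [Finset.mul_sum]
    refine Finset.sum_congr rfl fun i _ => ?_
    rw [pow_succ', ← mul_assoc, mul_one_div_cancel hN'.ne', one_mul]
  have h2 : 0 < invPowSum N K := by
    obtain ⟨K, rfl⟩ := Nat.exists_eq_add_of_lt hK
    rw [zero_add]
    exact invPowSum_succ_pos hN K
  rw [Cstar, ← h1, div_eq_div_iff hLx.ne' (by positivity)] at hrate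
  have : N * Lx = N * (Lw * invPowSum N K) := by linarith
  exact mul_left_cancel₀ hN'.ne' this

end LDC

namespace FinProbSpace

/-- The uniform distribution on a finite nonempty type. -/
abbrev uniform (Ω : Type) [Fintype Ω] [Nonempty Ω] : FinProbSpace where
  Ω := Ω
  p _ := 1 / Fintype.card Ω
  nonneg _ := by positivity
  sum_one := by simp

theorem prob_uniform_of_surjective {Ω B : Type} [Fintype Ω] [AddCommGroup Ω] [AddCommGroup B]
    [Fintype B] [DecidableEq B] (φ : Ω →+ B) (hφ : Function.Surjective φ) (b : B) :
    (uniform Ω).prob (α := B) φ b = 1 / Fintype.card B := by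
  have hfib (c : B) : (Finset.univ.filter fun x => φ x = c).card =
      (Finset.univ.filter fun x => φ x = b).card :=
    AddMonoidHom.card_fiber_eq_of_mem_range φ (hφ c) (hφ b)
  have hsum : Fintype.card Ω =
      Fintype.card B * (Finset.univ.filter fun x => φ x = b).card := by
    rw [← Finset.card_univ, Finset.card_eq_sum_card_fiberwise (f := φ) (t := Finset.univ)
      (fun _ _ => Finset.mem_coe.2 (Finset.mem_univ _)), Finset.sum_congr rfl fun c _ => hfib c]
    simp
  have hΩ : (Fintype.card Ω : ℝ) ≠ 0 := by simp
  have hB : (Fintype.card B : ℝ) ≠ 0 := by simp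
  have hprob : (uniform Ω).prob (α := B) φ b =
      (Finset.univ.filter fun x => φ x = b).card * (1 / Fintype.card Ω) := by
    rw [← nsmul_eq_mul, ← Finset.sum_const, Finset.sum_filter]
    rfl
  rw [hprob, mul_one_div, div_eq_div_iff hΩ hB, one_mul, mul_comm]
  exact_mod_cast hsum.symm

theorem ent_uniform_of_surjective {Ω B : Type} [Fintype Ω] [AddCommGroup Ω] [AddCommGroup B]
    [Fintype B] (φ : Ω →+ B) (hφ : Function.Surjective φ) :
    (uniform Ω).ent (α := B) φ = Real.logb 2 (Fintype.card B) := by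
  classical
  have h (ω : Ω) : (uniform Ω).fiberProb (α := B) φ ω = 1 / Fintype.card B := by
    rw [← prob_apply_eq_fiberProb, prob_uniform_of_surjective φ hφ]
  unfold ent
  calc _ = ∑ ω, (uniform Ω).p ω * Real.logb 2 (Fintype.card B) := by
        refine Finset.sum_congr rfl fun ω _ => ?_
        rw [h ω, one_div, Real.logb_inv]
        ring
    _ = _ := by rw [← Finset.sum_mul, (uniform Ω).sum_one, one_mul]

end FinProbSpace

theorem pow_mul_sub_one_div_eq_Cstar {K N : ℕ} (hK : 1 ≤ K) (hN : 2 ≤ N) :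
    (N : ℝ) ^ K * (N - 1) / ((N : ℝ) ^ K - 1) = Cstar N K := by
  have hN' : (1 : ℝ) < N := by exact_mod_cast hN
  have hpow : (1 : ℝ) < (N : ℝ) ^ K := one_lt_pow₀ hN' (by omega)
  have h1 : (N : ℝ) - 1 ≠ 0 := by linarith
  have h2 : (N : ℝ) ^ K - 1 ≠ 0 := by linarith
  have h3 : (N : ℝ) ≠ 0 := by linarith
  have h4 : 1 - (N : ℝ) ≠ 0 := by linarith
  have h5 : 1 - (N : ℝ) ^ K ≠ 0 := by linarith
  have hne : 1 / (N : ℝ) ≠ 1 := by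
    rw [Ne, div_eq_one_iff_eq h3]
    exact hN'.ne
  have hsum : ∑ j ∈ Finset.range K, (1 / (N : ℝ)) ^ j =
      N * ((N : ℝ) ^ K - 1) / ((N : ℝ) ^ K * (N - 1)) := by
    rw [geom_sum_eq hne, one_div_pow]
    field_simp
    ring
  rw [Cstar, hsum]
  field_simp

namespace GridCode

variable {K : ℕ} {G : Type}

section Line

variable [Fintype G] [DecidableEq G]

/-- The line through `q` in direction `k`. -/
def line (k : Fin K) (q : Fin K → G) : Finset (Fin K → G) :=
  Finset.univ.image (Function.update q k)

theorem card_line (k : Fin K) (q : Fin K → G) : (line k q).card = Fintype.card G := by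
  rw [line, Finset.card_image_of_injective _ (Function.update_injective q k), Finset.card_univ]

theorem mem_line_self (k : Fin K) (q : Fin K → G) : q ∈ line k q :=
  Finset.mem_image.2 ⟨q k, Finset.mem_univ _, Function.update_eq_self k q⟩

end Line

variable [AddCommGroup G]

/-- A source symbol: for every shift `s : Fin K → G`, one bit for each nonzero element of `G`. -/
abbrev Source (K : ℕ) (G : Type) [AddCommGroup G] : Type :=
  (Fin K → G) → {t : G // t ≠ 0} → ZMod 2

variable [DecidableEq G]

/-- Extension by zero of a bit vector indexed by the nonzero elements of `G`. -/
def extend : ({t : G // t ≠ 0} → ZMod 2) →+ (G → ZMod 2) where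
  toFun v t := if h : t ≠ 0 then v ⟨t, h⟩ else 0
  map_zero' := by ext t; simp
  map_add' v w := by
    ext t
    by_cases h : t = 0 <;> simp [h]

@[simp] theorem extend_zero_right (v : {t : G // t ≠ 0} → ZMod 2) : extend v 0 = 0 := by
  simp [extend]

theorem extend_of_ne (v : {t : G // t ≠ 0} → ZMod 2) {t : G} (h : t ≠ 0) :
    extend v t = v ⟨t, h⟩ := by
  simp [extend, h]

/-- The coded symbol at the grid point `q`: for every shift `s`, the sum of the bits
`W_k(s)` at position `q k + s k`. -/
def code (q : Fin K → G) : (Fin K → Source K G) →+ ((Fin K → G) → ZMod 2) where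
  toFun w s := ∑ k, extend (w k s) (q k + s k)
  map_zero' := by ext s; simp
  map_add' v w := by ext s; simp [Finset.sum_add_distrib]

theorem code_apply (q : Fin K → G) (w : Fin K → Source K G) (s : Fin K → G) :
    code q w s = ∑ k, extend (w k s) (q k + s k) := rfl

theorem code_apply_neg (q : Fin K → G) (w : Fin K → Source K G) : code q w (-q) = 0 := by
  simp [code_apply]

theorem code_update_sub (k : Fin K) (q : Fin K → G) (w : Fin K → Source K G) (s : Fin K → G)
    {t : G} (ht : t ≠ 0) :
    code (Function.update q k (t - s k)) w s - code (Function.update q k (- s k)) w s =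
      w k s ⟨t, ht⟩ := by
  rw [code_apply, code_apply, ← Finset.sum_sub_distrib,
    Finset.sum_eq_single_of_mem k (Finset.mem_univ k)]
  · simp [extend_of_ne _ ht]
  · intro j _ hj
    simp [Function.update_of_ne hj]

theorem eq_of_code_eq_on_line [Fintype G] {k : Fin K} {q : Fin K → G} {w w' : Fin K → Source K G}
    (h : ∀ p ∈ line k q, code p w = code p w') : w k = w' k := by
  have hmem (t : G) : Function.update q k t ∈ line k q :=
    Finset.mem_image_of_mem _ (Finset.mem_univ t)
  ext s ⟨t, ht⟩
  rw [← code_update_sub k q w s ht, ← code_update_sub k q w' s ht, h _ (hmem _), h _ (hmem _)]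

/-- The coded symbol at `q`, without the coordinate `-q` at which it vanishes. -/
def codeNonzero (q : Fin K → G) :
    (Fin K → Source K G) →+ ({s : Fin K → G // s ≠ -q} → ZMod 2) where
  toFun w s := code q w s
  map_zero' := by ext s; simp
  map_add' v w := by ext s; simp

theorem codeNonzero_apply (q : Fin K → G) (w : Fin K → Source K G)
    (s : {s : Fin K → G // s ≠ -q}) : codeNonzero q w s = code q w s.1 := rfl

theorem codeNonzero_surjective (q : Fin K → G) : Function.Surjective (codeNonzero q) := by
  intro v
  have hex (s : {s : Fin K → G // s ≠ -q}) : ∃ k, q k + s.1 k ≠ 0 := by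
    by_contra! h
    exact s.2 (funext fun k => eq_neg_of_add_eq_zero_right (h k))
  choose c hc using hex
  refine ⟨fun k s _ => if h : s ≠ -q then if k = c ⟨s, h⟩ then v ⟨s, h⟩ else 0 else 0, ?_⟩
  ext s
  rw [codeNonzero_apply, code_apply, Finset.sum_eq_single_of_mem (c s) (Finset.mem_univ _)]
  · rw [extend_of_ne _ (hc s)]
    simp [s.2]
  · intro k _ hk
    by_cases h : q k + s.1 k = 0
    · rw [h, extend_zero_right]
    · rw [extend_of_ne _ h]
      simp [s.2, hk]

theorem code_eq_iff (q : Fin K → G) (w w' : Fin K → Source K G) :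
    code q w = code q w' ↔ codeNonzero q w = codeNonzero q w' := by
  refine ⟨fun h => funext fun s => congrFun h s.1, fun h => funext fun s => ?_⟩
  by_cases hs : s = -q
  · rw [hs, code_apply_neg, code_apply_neg]
  · exact congrFun h ⟨s, hs⟩

variable [Fintype G]

theorem ent_code (q : Fin K → G) :
    (FinProbSpace.uniform (Fin K → Source K G)).ent (α := (Fin K → G) → ZMod 2) (code q) =
      (Fintype.card G : ℝ) ^ K - 1 := by
  rw [FinProbSpace.ent_congr (Y := codeNonzero q) _ fun w w' => code_eq_iff q w' w,
    FinProbSpace.ent_uniform_of_surjective _ (codeNonzero_surjective q)]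
  have h : Fintype.card {s : Fin K → G // s ≠ -q} = Fintype.card G ^ K - 1 := by
    simp [Fintype.card_subtype_compl]
  rw [Fintype.card_fun, ZMod.card, h]
  push_cast
  rw [Real.logb_pow, Real.logb_self_eq_one one_lt_two, mul_one,
    Nat.cast_sub (Nat.one_le_pow _ _ Fintype.card_pos)]
  push_cast
  rfl

theorem ent_source (k : Fin K) :
    (FinProbSpace.uniform (Fin K → Source K G)).ent (α := Source K G) (fun w => w k) =
      (Fintype.card G : ℝ) ^ K * (Fintype.card G - 1) := by
  have h := FinProbSpace.ent_uniform_of_surjective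
    (Pi.evalAddMonoidHom (fun _ : Fin K => Source K G) k) (Function.surjective_eval k)
  refine h.trans ?_
  have hc : Fintype.card {t : G // t ≠ 0} = Fintype.card G - 1 := by
    simp [Fintype.card_subtype_compl]
  rw [Fintype.card_fun, Fintype.card_fun, ZMod.card, hc, Fintype.card_fun, Fintype.card_fin]
  push_cast
  rw [Real.logb_pow, Real.logb_pow, Real.logb_self_eq_one one_lt_two, mul_one,
    Nat.cast_sub Fintype.card_pos]
  push_cast
  rfl

theorem iIndep_source :
    (FinProbSpace.uniform (Fin K → Source K G)).iIndep fun k w => w k := by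
  intro a
  have h (k : Fin K) := FinProbSpace.prob_uniform_of_surjective
    (Pi.evalAddMonoidHom (fun _ : Fin K => Source K G) k) (Function.surjective_eval k) (a k)
  have h' := FinProbSpace.prob_uniform_of_surjective
    (AddMonoidHom.id (Fin K → Source K G)) Function.surjective_id a
  refine h'.trans (Eq.trans ?_ (Finset.prod_congr rfl fun k _ => (h k).symm))
  simp

/-- The grid code, with coded symbols indexed through `e`. -/
def ldc {M : ℕ} (e : Fin M ≃ (Fin K → G)) :
    LDC K (Fintype.card G) M ((Fintype.card G : ℝ) ^ K * (Fintype.card G - 1))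
      ((Fintype.card G : ℝ) ^ K - 1) where
  P := FinProbSpace.uniform (Fin K → Source K G)
  V := Source K G
  V' := (Fin K → G) → ZMod 2
  W k w := w k
  X m := code (e m)
  indep := iIndep_source
  HW k := (FinProbSpace.H_eq_ent _ _).trans (ent_source k)
  coded_fn m := ⟨code (e m), fun _ => rfl⟩
  HX m := (FinProbSpace.H_eq_ent _ _).trans (ent_code (e m))
  decSets k := Finset.univ.image fun q => (line k q).map e.symm.toEmbedding
  decSets_nonempty _ := Finset.univ_nonempty.image _
  decSets_card k s hs := by
    obtain ⟨q, -, rfl⟩ := Finset.mem_image.1 hs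
    rw [Finset.card_map, card_line]
  decodes k s hs := by
    obtain ⟨q, -, rfl⟩ := Finset.mem_image.1 hs
    rw [FinProbSpace.condH, sub_eq_zero, FinProbSpace.H_eq_ent, FinProbSpace.H_eq_ent]
    refine FinProbSpace.ent_congr _ fun w w' => ?_
    rw [Prod.mk.injEq, and_iff_right_iff_imp]
    intro h
    refine eq_of_code_eq_on_line (q := q) fun p hp => ?_
    have := congrFun h ⟨e.symm p, Finset.mem_map_of_mem _ hp⟩
    simpa [FinProbSpace.tuple] using this

theorem ldc_isUniversal {M : ℕ} (e : Fin M ≃ (Fin K → G)) : (ldc e).IsUniversal := by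
  intro m k
  refine ⟨(line k (e m)).map e.symm.toEmbedding,
    Finset.mem_image_of_mem _ (Finset.mem_univ _), ?_⟩
  exact Finset.mem_map.2 ⟨e m, mem_line_self k (e m), e.symm_apply_apply m⟩

theorem exists_universal_ldc (hK : 1 ≤ K) (hG : 2 ≤ Fintype.card G) :
    ∃ (Lw Lx : ℝ), 0 < Lw ∧ 0 < Lx ∧
      ∃ C : LDC K (Fintype.card G) (Fintype.card G ^ K) Lw Lx,
        C.IsUniversal ∧ Lw / Lx = Cstar (Fintype.card G) K := by
  have hG' : (1 : ℝ) < Fintype.card G := by exact_mod_cast hG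
  have hpow : (1 : ℝ) < (Fintype.card G : ℝ) ^ K := one_lt_pow₀ hG' (by omega)
  have hcard : Fintype.card (Fin K → G) = Fintype.card G ^ K := by simp
  exact ⟨_, _, mul_pos (by linarith) (by linarith), by linarith,
    ldc (Fintype.equivFinOfCardEq hcard).symm, ldc_isUniversal _,
    pow_mul_sub_one_div_eq_Cstar hK hG⟩

end GridCode

/-- Minimum length of capacity achieving ULDCs, Theorem 2: for `N ≥ 2`,
`K ≥ 1`, the least code length `M` for which there exists a ULDC with locality `N`, `K`
source symbols and symbol rate `C*(N, K)` is `N^K`. -/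
theorem uldc_min_length (K N : ℕ) (hK : 1 ≤ K) (hN : 2 ≤ N) :
    IsLeast {M : ℕ | ∃ (Lw Lx : ℝ), 0 < Lw ∧ 0 < Lx ∧
      ∃ C : LDC K N M Lw Lx, C.IsUniversal ∧ Lw / Lx = Cstar N K} (N ^ K) := by
  constructor
  · have : NeZero N := ⟨by omega⟩
    have h := GridCode.exists_universal_ldc (G := ZMod N) hK (by rwa [ZMod.card])
    rwa [ZMod.card] at h
  · rintro M ⟨Lw, Lx, hLw, hLx, C, hC, hrate⟩
    exact C.pow_le_length hC (by omega) (by omega) hLw hLx hrate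
end
end

section
/- Independence of coded symbols in a decoding set of capacity achieving ULDCs (Lemma 3, Property 2(c)): let N ≥ 2, K ≥ 1, and consider a universal locally decodable code (ULDC) with locality N, K source symbols of entropy L_w > 0, M coded symbols of entropy L_x, and symbol rate L_w/L_x = C*(N,K). Then for every k ∈ {1,…,K}, every decoding set S ∈ 𝒮_k, and every pair of distinct indices i₁, i₂ ∈ S, one has H(X_{i₁} | X_{i₂}) = H(X_{i₁}); i.e., X_{i₁} and X_{i₂} are independent. -/
open scoped BigOperators

noncomputable section

namespace FinProbSpace

variable (P : FinProbSpace)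

theorem prob_nonneg {α : Type} [DecidableEq α] (X : P.Ω → α) (a : α) : 0 ≤ P.prob X a :=
  Finset.sum_nonneg fun ω _ => by
    split_ifs
    exacts [P.nonneg ω, le_rfl]

theorem prob_self_pos {α : Type} [DecidableEq α] (X : P.Ω → α) {ω : P.Ω} (h : 0 < P.p ω) :
    0 < P.prob X (X ω) := by
  refine Finset.sum_pos' (fun ω' _ => ?_) ⟨ω, Finset.mem_univ ω, by simpa using h⟩
  split_ifs
  exacts [P.nonneg ω', le_rfl]

theorem sum_p_mul_comp {α : Type} [Fintype α] [DecidableEq α] (X : P.Ω → α) (g : α → ℝ) :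
    ∑ ω, P.p ω * g (X ω) = ∑ a, P.prob X a * g a := by
  simp only [prob, Finset.sum_mul]
  rw [Finset.sum_comm]
  simp

theorem sum_prob {α : Type} [Fintype α] [DecidableEq α] (X : P.Ω → α) :
    ∑ a, P.prob X a = 1 := by
  simpa [P.sum_one] using (P.sum_p_mul_comp X fun _ => 1).symm

theorem sum_prob_pair {α β : Type} [Fintype α] [DecidableEq α] [DecidableEq β]
    (X : P.Ω → α) (Y : P.Ω → β) (b : β) :
    ∑ a, P.prob (fun ω => (X ω, Y ω)) (a, b) = P.prob Y b := by
  simp only [prob, Prod.mk.injEq]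
  rw [Finset.sum_comm]
  refine Finset.sum_congr rfl fun ω _ => ?_
  by_cases h : Y ω = b <;> simp [h]

theorem prob_le_prob_of_determines {α β : Type} [DecidableEq α] [DecidableEq β]
    (X : P.Ω → α) (Y : P.Ω → β) (h : ∀ ω ω', Y ω = Y ω' → X ω = X ω') (ω : P.Ω) :
    P.prob Y (Y ω) ≤ P.prob X (X ω) := by
  refine Finset.sum_le_sum fun ω' _ => ?_
  by_cases hY : Y ω' = Y ω
  · simp [hY, h _ _ hY]
  · rw [if_neg hY]
    split_ifs
    exacts [P.nonneg ω', le_rfl]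

/-- Entropy as the expected surprisal. -/
theorem H_eq_sum_p {α : Type} [Fintype α] [DecidableEq α] (X : P.Ω → α) :
    P.H X = ∑ ω, P.p ω * -Real.logb 2 (P.prob X (X ω)) := by
  rw [P.sum_p_mul_comp X fun a => -Real.logb 2 (P.prob X a)]
  simp [H]

/-- A random variable determined by another one has at most the entropy of the latter. -/
theorem H_le_of_determines {α β : Type} [Fintype α] [DecidableEq α] [Fintype β] [DecidableEq β]
    (X : P.Ω → α) (Y : P.Ω → β) (h : ∀ ω ω', Y ω = Y ω' → X ω = X ω') : P.H X ≤ P.H Y := by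
  rw [H_eq_sum_p, H_eq_sum_p]
  refine Finset.sum_le_sum fun ω _ => ?_
  rcases (P.nonneg ω).eq_or_lt with h0 | h0
  · simp [← h0]
  · exact mul_le_mul_of_nonneg_left (neg_le_neg (Real.logb_le_logb_of_le one_lt_two
      (P.prob_self_pos Y h0) (P.prob_le_prob_of_determines X Y h ω))) h0.le

theorem H_nonneg {α : Type} [Fintype α] [DecidableEq α] (X : P.Ω → α) : 0 ≤ P.H X := by
  refine Finset.sum_nonneg fun a _ => ?_
  have h1 : P.prob X a ≤ 1 := P.sum_prob X ▸
    Finset.single_le_sum (f := P.prob X) (fun b _ => P.prob_nonneg X b) (Finset.mem_univ a)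
  have h2 := Real.logb_nonpos one_lt_two (P.prob_nonneg X a) h1
  nlinarith [P.prob_nonneg X a]

/-- The expected value of the likelihood ratio between the conditionally independent coupling
and the joint law is at most one. -/
theorem sum_p_mul_ratio_le_one {α β γ : Type} [Fintype α] [DecidableEq α] [Fintype β]
    [DecidableEq β] [Fintype γ] [DecidableEq γ] (X : P.Ω → α) (Y : P.Ω → β) (Z : P.Ω → γ) :
    ∑ ω, P.p ω * (P.prob (fun ω => (X ω, Z ω)) (X ω, Z ω) *
      P.prob (fun ω => (Y ω, Z ω)) (Y ω, Z ω) /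
      (P.prob (fun ω => (X ω, Y ω, Z ω)) (X ω, Y ω, Z ω) * P.prob Z (Z ω))) ≤ 1 := by
  rw [P.sum_p_mul_comp (fun ω => (X ω, Y ω, Z ω)) fun t =>
    P.prob (fun ω => (X ω, Z ω)) (t.1, t.2.2) * P.prob (fun ω => (Y ω, Z ω)) t.2 /
      (P.prob (fun ω => (X ω, Y ω, Z ω)) t * P.prob Z t.2.2)]
  calc _ ≤ ∑ t : α × β × γ, P.prob (fun ω => (X ω, Z ω)) (t.1, t.2.2) *
        P.prob (fun ω => (Y ω, Z ω)) t.2 / P.prob Z t.2.2 := by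
        refine Finset.sum_le_sum fun t _ => ?_
        rcases (P.prob_nonneg (fun ω => (X ω, Y ω, Z ω)) t).eq_or_lt with h | h
        · rw [← h, zero_mul]
          exact div_nonneg (mul_nonneg (P.prob_nonneg _ _) (P.prob_nonneg _ _))
            (P.prob_nonneg _ _)
        · rw [← mul_div_assoc, mul_div_mul_left _ _ h.ne']
    _ = ∑ c, P.prob Z c := by
        simp only [Fintype.sum_prod_type, mul_div_assoc]
        rw [Finset.sum_congr rfl fun a _ => Finset.sum_comm, Finset.sum_comm]
        refine Finset.sum_congr rfl fun c _ => ?_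
        simp only [← Finset.mul_sum, ← Finset.sum_mul, ← Finset.sum_div, sum_prob_pair]
        rcases eq_or_ne (P.prob Z c) 0 with h | h
        · simp [h]
        · field_simp
    _ = 1 := P.sum_prob Z
    _ ≤ 1 := le_rfl

/-- Submodularity of Shannon entropy. -/
theorem H_submodular {α β γ : Type} [Fintype α] [DecidableEq α] [Fintype β] [DecidableEq β]
    [Fintype γ] [DecidableEq γ] (X : P.Ω → α) (Y : P.Ω → β) (Z : P.Ω → γ) :
    P.H (fun ω => (X ω, Y ω, Z ω)) + P.H Z ≤
      P.H (fun ω => (X ω, Z ω)) + P.H (fun ω => (Y ω, Z ω)) := by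
  have hlog : 0 < Real.log 2 := Real.log_pos one_lt_two
  have key : ∀ ω, P.p ω * (Real.logb 2 (P.prob (fun ω => (X ω, Z ω)) (X ω, Z ω)) +
      Real.logb 2 (P.prob (fun ω => (Y ω, Z ω)) (Y ω, Z ω)) -
      Real.logb 2 (P.prob (fun ω => (X ω, Y ω, Z ω)) (X ω, Y ω, Z ω)) -
      Real.logb 2 (P.prob Z (Z ω))) ≤
      (P.p ω * (P.prob (fun ω => (X ω, Z ω)) (X ω, Z ω) *
        P.prob (fun ω => (Y ω, Z ω)) (Y ω, Z ω) /
        (P.prob (fun ω => (X ω, Y ω, Z ω)) (X ω, Y ω, Z ω) * P.prob Z (Z ω))) - P.p ω) /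
        Real.log 2 := by
    intro ω
    rcases (P.nonneg ω).eq_or_lt with h0 | h0
    · simp [← h0]
    have h1 := P.prob_self_pos (fun ω => (X ω, Z ω)) h0
    have h2 := P.prob_self_pos (fun ω => (Y ω, Z ω)) h0
    have h3 := P.prob_self_pos (fun ω => (X ω, Y ω, Z ω)) h0
    have h4 := P.prob_self_pos Z h0
    have h5 := Real.log_le_sub_one_of_pos (div_pos (mul_pos h1 h2) (mul_pos h3 h4))
    rw [Real.log_div (mul_pos h1 h2).ne' (mul_pos h3 h4).ne', Real.log_mul h1.ne' h2.ne',
      Real.log_mul h3.ne' h4.ne'] at h5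
    rw [le_div_iff₀ hlog]
    simp only [Real.logb, ← add_div, ← sub_div]
    rw [mul_assoc, div_mul_cancel₀ _ hlog.ne']
    have h6 := mul_le_mul_of_nonneg_left h5 h0.le
    linarith
  have hsum := Finset.sum_le_sum fun ω (_ : ω ∈ Finset.univ) => key ω
  rw [← Finset.sum_div, Finset.sum_sub_distrib, P.sum_one] at hsum
  have hle := hsum.trans (div_nonpos_of_nonpos_of_nonneg
    (sub_nonpos.2 (P.sum_p_mul_ratio_le_one X Y Z)) hlog.le)
  simp only [mul_sub, mul_add, Finset.sum_sub_distrib, Finset.sum_add_distrib] at hle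
  simp only [H_eq_sum_p, mul_neg, Finset.sum_neg_distrib]
  linarith

/-- Entropy is additive on independent families. -/
theorem H_tuple_of_iIndep {ι V : Type} [Fintype ι] [DecidableEq ι] [Fintype V] [DecidableEq V]
    (X : ι → P.Ω → V) (h : P.iIndep X) : P.H (P.tuple X) = ∑ i, P.H (X i) := by
  simp only [H_eq_sum_p]
  rw [Finset.sum_comm]
  refine Finset.sum_congr rfl fun ω _ => ?_
  rcases (P.nonneg ω).eq_or_lt with h0 | h0
  · simp [← h0]
  rw [h, ← Finset.mul_sum, Finset.sum_neg_distrib]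
  simp only [tuple]
  rw [Real.logb_prod _ _ fun i _ => (P.prob_self_pos (X i) h0).ne']

theorem condH_nonneg {α β : Type} [Fintype α] [DecidableEq α] [Fintype β] [DecidableEq β]
    (X : P.Ω → α) (Y : P.Ω → β) : 0 ≤ P.condH X Y :=
  sub_nonneg.2 (P.H_le_of_determines _ _ fun _ _ h => congrArg Prod.snd h)

theorem condH_le_H {α β : Type} [Fintype α] [DecidableEq α] [Fintype β] [DecidableEq β]
    (X : P.Ω → α) (Y : P.Ω → β) : P.condH X Y ≤ P.H X := by
  have h := P.H_submodular X Y fun _ => ()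
  have h0 := P.H_nonneg fun _ => ()
  have h1 := P.H_le_of_determines (fun ω => (X ω, Y ω)) (fun ω => (X ω, Y ω, ()))
    fun ω ω' h => by simpa using h
  have h2 := P.H_le_of_determines (fun ω => (X ω, ())) X fun ω ω' h => by simpa using h
  have h3 := P.H_le_of_determines (fun ω => (Y ω, ())) Y fun ω ω' h => by simpa using h
  unfold condH
  linarith

/-- The restriction of a family of random variables to a finite set of indices. -/
def restrict {ι V : Type} (X : ι → P.Ω → V) (s : Finset ι) : P.Ω → {i // i ∈ s} → V :=
  P.tuple fun i : {i // i ∈ s} => X i.1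

theorem restrict_eq_iff {ι V : Type} (X : ι → P.Ω → V) (s : Finset ι) (ω ω' : P.Ω) :
    P.restrict X s ω = P.restrict X s ω' ↔ ∀ i ∈ s, X i ω = X i ω' := by
  simp [restrict, tuple, funext_iff]

theorem condH_restrict_le_sum {ι V β : Type} [DecidableEq ι] [Fintype V] [DecidableEq V]
    [Fintype β] [DecidableEq β] (X : ι → P.Ω → V) (Z : P.Ω → β) (s : Finset ι) :
    P.condH (P.restrict X s) Z ≤ ∑ i ∈ s, P.condH (X i) Z := by
  induction s using Finset.induction_on with
  | empty =>
    simpa [condH] using P.H_le_of_determines (fun ω => (P.restrict X ∅ ω, Z ω)) Z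
      fun ω ω' h => by simp [h, restrict_eq_iff]
  | insert i s hi ih =>
    rw [Finset.sum_insert hi]
    have h1 := P.H_submodular (X i) (P.restrict X s) Z
    have h2 := P.H_le_of_determines (fun ω => (P.restrict X (insert i s) ω, Z ω))
      (fun ω => (X i ω, P.restrict X s ω, Z ω)) fun ω ω' h => by
        simp only [Prod.mk.injEq, restrict_eq_iff] at h ⊢
        simpa [h.1, h.2.2] using h.2.1
    unfold condH at *
    linarith

theorem condH_le_condH_restrict {ι V β : Type} [DecidableEq ι] [Fintype V] [DecidableEq V]
    [Fintype β] [DecidableEq β] (X : ι → P.Ω → V) (Z : P.Ω → β) {s : Finset ι} {i : ι}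
    (hi : i ∈ s) : P.condH (X i) Z ≤ P.condH (P.restrict X s) Z := by
  refine sub_le_sub_right (P.H_le_of_determines _ _ fun ω ω' h => ?_) _
  simp only [Prod.mk.injEq, restrict_eq_iff] at h ⊢
  exact ⟨h.1 i hi, h.2⟩

theorem H_restrict_le_sum {ι V : Type} [DecidableEq ι] [Fintype V] [DecidableEq V]
    (X : ι → P.Ω → V) (s : Finset ι) : P.H (P.restrict X s) ≤ ∑ i ∈ s, P.H (X i) := by
  have h1 := (P.condH_restrict_le_sum X (P.restrict X ∅) s).trans
    (Finset.sum_le_sum fun i _ => P.condH_le_H (X i) _)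
  have h2 := P.H_le_of_determines (P.restrict X s)
    (fun ω => (P.restrict X s ω, P.restrict X ∅ ω)) fun _ _ h => congrArg Prod.fst h
  have h3 : P.H (P.restrict X ∅) ≤ 0 := by
    have := P.H_le_of_determines (P.restrict X ∅) (fun _ => ()) fun ω ω' _ => by
      simp [restrict_eq_iff]
    refine this.trans ?_
    simp [H, prob, P.sum_one]
  unfold condH at h1
  linarith

theorem H_restrict_of_iIndep {ι V : Type} [Fintype ι] [DecidableEq ι] [Fintype V]
    [DecidableEq V] (X : ι → P.Ω → V) (h : P.iIndep X) (s : Finset ι) :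
    P.H (P.restrict X s) = ∑ i ∈ s, P.H (X i) := by
  refine le_antisymm (P.H_restrict_le_sum X s) ?_
  have h1 := P.H_tuple_of_iIndep X h
  have h2 := P.H_restrict_le_sum X sᶜ
  have h3 := P.condH_le_H (P.restrict X s) (P.restrict X sᶜ)
  have h4 := P.H_le_of_determines (P.tuple X) (fun ω => (P.restrict X s ω, P.restrict X sᶜ ω))
    fun ω ω' h => by
      simp only [Prod.mk.injEq, restrict_eq_iff, Finset.mem_compl] at h
      funext i
      by_cases hi : i ∈ s
      exacts [h.1 i hi, h.2 i hi]
  rw [← Finset.sum_add_sum_compl s] at h1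
  unfold condH at h3
  linarith

end FinProbSpace

namespace LDC

variable {K N M : ℕ} {Lw Lx : ℝ} (C : LDC K N M Lw Lx)

theorem H_restrict_W (A : Finset (Fin K)) : C.P.H (C.P.restrict C.W A) = A.card * Lw := by
  simp [C.P.H_restrict_of_iIndep C.W C.indep, C.HW]

/-- Revealing a fresh source symbol lowers the conditional entropy of any of its decoding sets
by at least `Lw`. -/
theorem add_condH_le_condH_of_decodes {k : Fin K} {S : Finset (Fin M)} (hS : S ∈ C.decSets k)
    {A : Finset (Fin K)} (hk : k ∉ A) :
    Lw + C.P.condH (C.P.restrict C.X S) (C.P.restrict C.W (insert k A)) ≤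
      C.P.condH (C.P.restrict C.X S) (C.P.restrict C.W A) := by
  have h1 := C.P.H_submodular (C.W k) (C.P.restrict C.W A) (C.P.restrict C.X S)
  have h2 : C.P.condH (C.W k) (C.P.restrict C.X S) = 0 := C.decodes k S hS
  have h3 := C.P.H_le_of_determines
    (fun ω => (C.P.restrict C.X S ω, C.P.restrict C.W (insert k A) ω))
    (fun ω => (C.W k ω, C.P.restrict C.W A ω, C.P.restrict C.X S ω)) fun ω ω' h => by
      simp only [Prod.mk.injEq, FinProbSpace.restrict_eq_iff] at h ⊢
      exact ⟨h.2.2, by simpa [h.1] using h.2.1⟩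
  have h4 := C.P.H_le_of_determines (fun ω => (C.P.restrict C.W A ω, C.P.restrict C.X S ω))
    (fun ω => (C.P.restrict C.X S ω, C.P.restrict C.W A ω)) fun ω ω' h => by
      simp only [Prod.mk.injEq] at h ⊢
      exact h.symm
  unfold FinProbSpace.condH at *
  rw [C.H_restrict_W, C.H_restrict_W, Finset.card_insert_of_notMem hk]
  push_cast
  linarith

/-- If `u` satisfies `N u (n + 1) = Lw + u n` and `u K = Lx`, then conditioned on all but `n`
source symbols every coded symbol of a universal code has entropy at most `u n`. -/
theorem condH_le_of_recurrence (hU : C.IsUniversal) (u : ℕ → ℝ)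
    (hu : ∀ n, N * u (n + 1) = Lw + u n) (huK : u K = Lx) (A : Finset (Fin K)) :
    ∀ m, C.P.condH (C.X m) (C.P.restrict C.W A) ≤ u (K - A.card) := by
  induction A using Finset.induction_on with
  | empty =>
    intro m
    simpa [huK, C.HX] using C.P.condH_le_H (C.X m) (C.P.restrict C.W ∅)
  | insert k A hk ih =>
    intro m
    obtain ⟨S, hS, hm⟩ := hU m k
    have h1 := C.add_condH_le_condH_of_decodes hS hk
    have h2 := C.P.condH_le_condH_restrict C.X (C.P.restrict C.W (insert k A)) hm
    have h3 := C.P.condH_restrict_le_sum C.X (C.P.restrict C.W A) S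
    have h4 := Finset.sum_le_card_nsmul S _ _ fun i _ => ih i
    rw [C.decSets_card k S hS, nsmul_eq_mul] at h4
    have hcard := card_finset_fin_le (insert k A)
    rw [Finset.card_insert_of_notMem hk] at hcard ⊢
    have h5 := hu (K - (A.card + 1))
    rw [show K - (A.card + 1) + 1 = K - A.card by omega] at h5
    linarith

/-- In a universal code attaining the recurrence of `LDC.condH_le_of_recurrence` with `u 0 = 0`,
the entropy bounds are also lower bounds. -/
theorem le_condH_of_recurrence (hU : C.IsUniversal) (u : ℕ → ℝ)
    (hu : ∀ n, N * u (n + 1) = Lw + u n) (hu0 : u 0 = 0) (huK : u K = Lx) (n : ℕ) :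
    ∀ A : Finset (Fin K), A.card + n = K → ∀ m,
      u n ≤ C.P.condH (C.X m) (C.P.restrict C.W A) := by
  induction n with
  | zero => exact fun A _ m => hu0 ▸ C.P.condH_nonneg _ _
  | succ n ih =>
    intro A hA m
    obtain ⟨k, hk⟩ : ∃ k, k ∉ A := by
      by_contra! h
      rw [Finset.eq_univ_iff_forall.2 h, Finset.card_univ, Fintype.card_fin] at hA
      omega
    obtain ⟨S, hS, hm⟩ := hU m k
    have h1 := C.add_condH_le_condH_of_decodes hS hk
    have h2 := C.P.condH_le_condH_restrict C.X (C.P.restrict C.W (insert k A)) hm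
    have h3 := C.P.condH_restrict_le_sum C.X (C.P.restrict C.W A) S
    have h4 := ih (insert k A) (by rw [Finset.card_insert_of_notMem hk]; omega) m
    have h5 := Finset.sum_le_card_nsmul (S.erase m) _ _ fun i _ =>
      C.condH_le_of_recurrence hU u hu huK A i
    rw [← Finset.add_sum_erase S _ hm] at h3
    have h6 := C.decSets_card k S hS ▸ Finset.card_erase_add_one hm
    rw [nsmul_eq_mul, show K - A.card = n + 1 by omega] at h5
    have h7 : (((S.erase m).card : ℝ) + 1) = N := by exact_mod_cast h6
    have h8 := hu n
    rw [← h7] at h8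
    linarith

/-- The coded symbols of a decoding set of a capacity achieving universal code have full joint
entropy. -/
theorem le_H_restrict_X_of_capacity (hK : 1 ≤ K) (hN : 1 ≤ N) (hLw : 0 < Lw)
    (hU : C.IsUniversal) (hcap : Lw / Lx = Cstar N K) {k : Fin K} {S : Finset (Fin M)}
    (hS : S ∈ C.decSets k) : N * Lx ≤ C.P.H (C.P.restrict C.X S) := by
  have hN0 : (0 : ℝ) < N := by exact_mod_cast hN
  set q : ℕ → ℝ := fun n => ∑ j ∈ Finset.range n, (1 / (N : ℝ)) ^ j with hq
  have hqK : 0 < q K := Finset.sum_pos (fun j _ => by positivity)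
    (Finset.nonempty_range_iff.2 (by omega))
  have hLx : Lx ≠ 0 := by
    rintro rfl
    rw [div_zero] at hcap
    exact (div_pos hN0 hqK).ne hcap
  set u : ℕ → ℝ := fun n => Lw * q n / N with hu'
  have hu : ∀ n, N * u (n + 1) = Lw + u n := by
    intro n
    have : q (n + 1) = q n / N + 1 := by
      simp only [hq]
      rw [Finset.sum_range_succ', pow_zero, Finset.sum_div]
      congr 1
      exact Finset.sum_congr rfl fun j _ => by rw [pow_succ]; ring
    simp only [hu', this]
    field_simp
    ring
  have hu0 : u 0 = 0 := by simp [hu', hq]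
  have huK : u K = Lx := by
    have : Lw / Lx = N / q K := hcap
    simp only [hu']
    field_simp at this ⊢
    linarith
  obtain ⟨n, rfl⟩ : ∃ n, K = n + 1 := ⟨K - 1, by omega⟩
  have hne : S.Nonempty := Finset.card_pos.1 (by rw [C.decSets_card k S hS]; omega)
  obtain ⟨m, hm⟩ := hne
  have h1 := C.add_condH_le_condH_of_decodes hS (Finset.notMem_empty k)
  have h2 := C.P.condH_le_condH_restrict C.X (C.P.restrict C.W (insert k ∅)) hm
  have h3 := C.le_condH_of_recurrence hU u hu hu0 huK n (insert k ∅) (by simp; omega) m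
  have h4 := C.P.condH_le_H (C.P.restrict C.X S) (C.P.restrict C.W ∅)
  have h5 := hu n
  rw [huK] at h5
  linarith

end LDC

/-- Independence of coded symbols in a decoding set, Lemma 3,
Property 2(c): in a capacity achieving ULDC, for every decoding set `S ∈ 𝒮_k` and distinct
`i₁, i₂ ∈ S`, `H(X_{i₁} | X_{i₂}) = H(X_{i₁})`. -/
theorem uldc_indep_coded_symbols (K N M : ℕ) (hK : 1 ≤ K) (hN : 2 ≤ N) (Lw Lx : ℝ)
    (hLw : 0 < Lw) (C : LDC K N M Lw Lx) (hU : C.IsUniversal)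
    (hcap : Lw / Lx = Cstar N K)
    (k : Fin K) (S : Finset (Fin M)) (hS : S ∈ C.decSets k)
    (i₁ i₂ : Fin M) (h₁ : i₁ ∈ S) (h₂ : i₂ ∈ S) (hne : i₁ ≠ i₂) :
    C.P.condH (C.X i₁) (C.X i₂) = C.P.H (C.X i₁) := by
  have h1 := C.le_H_restrict_X_of_capacity hK (by omega) hLw hU hcap hS
  have h2 := C.P.condH_restrict_le_sum C.X (C.X i₂) (S.erase i₂)
  have h3 := C.P.H_le_of_determines (C.P.restrict C.X S)
    (fun ω => (C.P.restrict C.X (S.erase i₂) ω, C.X i₂ ω)) fun ω ω' h => by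
      simp only [Prod.mk.injEq, FinProbSpace.restrict_eq_iff] at h ⊢
      intro i hi
      rcases eq_or_ne i i₂ with rfl | hi'
      exacts [h.2, h.1 i (Finset.mem_erase.2 ⟨hi', hi⟩)]
  have hle : ∀ i, C.P.condH (C.X i) (C.X i₂) ≤ Lx := fun i =>
    (C.P.condH_le_H _ _).trans_eq (C.HX i)
  have h4 : i₁ ∈ S.erase i₂ := Finset.mem_erase.2 ⟨hne, h₁⟩
  have h5 := Finset.sum_le_card_nsmul ((S.erase i₂).erase i₁) _ _ fun i _ => hle i
  rw [← Finset.add_sum_erase _ _ h4] at h2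
  have hcard : ((((S.erase i₂).erase i₁).card : ℝ) + 1) + 1 = N := by
    have h6 := Finset.card_erase_add_one h4
    have h7 := C.decSets_card k S hS ▸ Finset.card_erase_add_one h₂
    exact_mod_cast h6 ▸ h7
  rw [nsmul_eq_mul] at h5
  rw [← hcard] at h1
  have h8 := C.HX i₂
  rw [C.HX]
  refine le_antisymm (hle i₁) ?_
  unfold FinProbSpace.condH at *
  linarith
end
end
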